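/- arXiv:2305.03906 — 3 statements merged into one kernel-verified Lean document; each statement's English description precedes it below -/
import Mathlib

section
/- Let ω = (ω_n, …, ω_1, ω_0) be a general basis of the polynomials of degree ≤ n over a field F, let F(x) = Σ_{i=0}^n a_i ω_i and G(x) = Σ_{i=0}^m b_i ω_i with deg F = n, deg G = m, n > m, and assume F is squarefree, i.e. its roots α_1, …, α_n in the algebraic closure F̄ are pairwise distinct. Then for every 0 ≤ k ≤ m, the k-th subresultant polynomial satisfies S_k = (−1)^{(n−k)(n−k−1)/2} · a_n^{m−n} · detp_ω(B_{ω,k}) as an identity in F̄[x] (equivalently, a_n^{n−m} · S_k = (−1)^{(n−k)(n−k−1)/2} · detp_ω(B_{ω,k})), where B_{ω,k} is the (n−k)×n submatrix of the Bézout matrix B_ω of F and G in the basis ω obtained by deleting its last k rows. -/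
open Polynomial Matrix BigOperators

noncomputable section

/-- A *general basis* of the polynomials of degree ≤ `n` over `K`:
`ω i` is monic of degree `i` for every `i ≤ n`. -/
def IsGeneralBasis {K : Type*} [Field K] (n : ℕ) (ω : ℕ → Polynomial K) : Prop :=
  ∀ i ≤ n, (ω i).Monic ∧ (ω i).natDegree = i

/-- `B` is the Bézout matrix of `P` and `Q` in the basis `ω`:
`P(x)Q(y) − P(y)Q(x) = (x − y) · ω̄(x)ᵀ B ω̄(y)` in `K[x,y] = (K[y])[x]`,
where the outer variable is `x` and the inner one is `y`, and
`ω̄ = (ω_{n−1}, …, ω_1, ω_0)ᵀ`. -/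
def BezoutRelation {K : Type*} [Field K] (n : ℕ) (ω : ℕ → Polynomial K)
    (P Q : Polynomial K) (B : Matrix (Fin n) (Fin n) K) : Prop :=
  P.map Polynomial.C * Polynomial.C Q - Polynomial.C P * Q.map Polynomial.C =
    (Polynomial.X - Polynomial.C Polynomial.X) *
      ∑ i : Fin n, ∑ j : Fin n,
        (ω (n - 1 - (i : ℕ))).map Polynomial.C * Polynomial.C (ω (n - 1 - (j : ℕ))) *
          Polynomial.C (Polynomial.C (B i j))

/-- The `(n−k) × n` submatrix of an `n × n` matrix obtained by deleting the last `k` rows. -/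
def topRows {K : Type*} (n k : ℕ) (B : Matrix (Fin n) (Fin n) K) :
    Matrix (Fin (n - k)) (Fin n) K :=
  Matrix.of fun i j => B ⟨(i : ℕ), by have := i.isLt; omega⟩ j

/-- The determinental polynomial of an `(n−k) × n` matrix `M` associated with `ω`:
`detp_ω M = Σ_{i=0}^k det(M̂_i) · ω_i` where `M̂_i` consists of the first `n−k−1`
columns of `M` together with its (1-based) `(n−i)`-th column. -/
def detp {K : Type*} [Field K] {n k : ℕ} (hkn : k < n) (ω : ℕ → Polynomial K)
    (M : Matrix (Fin (n - k)) (Fin n) K) : Polynomial K :=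
  ∑ i ∈ Finset.range (k + 1),
    Polynomial.C (Matrix.det (Matrix.of fun r c : Fin (n - k) =>
      if (c : ℕ) < n - k - 1 then M r ⟨(c : ℕ), by have := c.isLt; omega⟩
      else M r ⟨n - 1 - i, by omega⟩)) * ω i

/-- The Vandermonde-type matrix with `(i,j)` entry `α_j^{n−i}` (1-based `i`). -/
def vmat {L : Type*} [Field L] (n : ℕ) (α : Fin n → L) : Matrix (Fin n) (Fin n) L :=
  Matrix.of fun i j => α j ^ (n - 1 - (i : ℕ))

/-- The `(n+1) × (n+1)` matrix whose determinant is the numerator `D` in the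
root expression of the `k`-th subresultant polynomial (power basis):
rows `1,…,n−k` have entries `α_j^{n−k−i} G(α_j)` (last column `0`),
rows `n−k+1,…,n+1` have entries `α_j^{k+1−i}` (last column `x^{k+1−i}`). -/
def subresNum {K L : Type*} [Field K] [Field L] [Algebra K L] (n k : ℕ)
    (α : Fin n → L) (G : Polynomial K) :
    Matrix (Fin (n + 1)) (Fin (n + 1)) (Polynomial L) :=
  Matrix.of fun i j =>
    if hj : (j : ℕ) < n then
      if (i : ℕ) < n - k then
        Polynomial.C (α ⟨(j : ℕ), hj⟩ ^ (n - k - 1 - (i : ℕ)) *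
          Polynomial.aeval (α ⟨(j : ℕ), hj⟩) G)
      else Polynomial.C (α ⟨(j : ℕ), hj⟩ ^ (n - (i : ℕ)))
    else
      if (i : ℕ) < n - k then 0 else Polynomial.X ^ (n - (i : ℕ))

/-- The `k`-th subresultant polynomial of `P` and `G` in terms of the roots `α` of `P`:
`S_k = (−1)^k a^{m−k} · D / V`. -/
def subresPoly {K L : Type*} [Field K] [Field L] [Algebra K L] (n m k : ℕ)
    (a : K) (α : Fin n → L) (G : Polynomial K) : Polynomial L :=
  Polynomial.C ((-1) ^ k * algebraMap K L a ^ (m - k) / (vmat n α).det) *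
    (subresNum n k α G).det

theorem sign_revPerm (r : ℕ) :
    Equiv.Perm.sign (Fin.revPerm : Equiv.Perm (Fin r)) = (-1) ^ (r * (r - 1) / 2) := by
  rw [Equiv.Perm.sign_eq_prod_prod_Iio]
  have h : ∀ j : Fin r, (∏ i ∈ Finset.Iio j,
      if Fin.revPerm i < Fin.revPerm j then (1 : ℤˣ) else -1) = (-1) ^ (j : ℕ) := by
    intro j
    rw [Finset.prod_congr rfl (g := fun _ => (-1 : ℤˣ)), Finset.prod_const, Fin.card_Iio]
    intro i hi
    rw [if_neg]
    simpa using (Finset.mem_Iio.mp hi).le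
  rw [Finset.prod_congr rfl fun j _ => h j, Finset.prod_pow_eq_pow_sum,
    ← Finset.sum_range (fun i => i), Finset.sum_range_id]

/-- Row reduction of a matrix whose rows are weighted and unweighted polynomial evaluations. -/
theorem det_weighted_aeval {S R : Type*} [CommRing S] [CommRing R] [Algebra S R] {r s : ℕ}
    (g z : Fin r ⊕ Fin s → R) (p w : ℕ → S[X]) (a : S)
    (hp : ∀ i < r, (p i).natDegree ≤ i) (hpa : ∀ i < r, (p i).coeff i = a)
    (hw : ∀ i < s, (w i).natDegree ≤ i) (hw1 : ∀ i < s, (w i).coeff i = 1) :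
    (Matrix.of (Sum.elim (fun (i : Fin r) j => g j * aeval (z j) (p i))
      (fun (i : Fin s) j => aeval (z j) (w i.rev)))).det =
    (-1) ^ (r * (r - 1) / 2) * algebraMap S R a ^ r *
      (Matrix.of (Sum.elim (fun (i : Fin r) j => z j ^ (i.rev : ℕ) * g j)
        (fun (i : Fin s) j => z j ^ (i.rev : ℕ)))).det := by
  set T : Matrix (Fin r) (Fin r) R :=
    Matrix.of fun i l => algebraMap S R ((p i).coeff l.rev) with hT
  set W : Matrix (Fin s) (Fin s) R :=
    Matrix.of fun i l => algebraMap S R ((w i.rev).coeff l.rev) with hW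
  have hTdet : T.det = (-1) ^ (r * (r - 1) / 2) * algebraMap S R a ^ r := by
    set T' : Matrix (Fin r) (Fin r) R := Matrix.of fun i l => algebraMap S R ((p i).coeff l)
    have h1 : T = T'.submatrix id Fin.revPerm := rfl
    rw [h1, Matrix.det_permute', sign_revPerm, Matrix.det_of_isLowerTriangular T']
    · simp [T', hpa]
    · intro i j hij
      have hij' : i < j := hij
      simp only [T', Matrix.of_apply]
      rw [coeff_eq_zero_of_natDegree_lt, map_zero]
      exact (hp i i.2).trans_lt hij'
  have hWdet : W.det = 1 := by
    rw [Matrix.det_of_isUpperTriangular]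
    · exact Finset.prod_eq_one fun i _ => by
        simp only [W, Matrix.of_apply, hw1 _ i.rev.2, map_one]
    · intro i j hij
      have hij' : j < i := hij
      simp only [W, Matrix.of_apply]
      rw [coeff_eq_zero_of_natDegree_lt, map_zero]
      exact (hw _ i.rev.2).trans_lt (Fin.rev_lt_rev.mpr hij')
  have hsum : ∀ (d : ℕ) (f : S[X]) (x : R), f.natDegree < d →
      aeval x f = ∑ l : Fin d, algebraMap S R (f.coeff l.rev) * x ^ (l.rev : ℕ) := by
    intro d f x hd
    rw [aeval_eq_sum_range' hd, Finset.sum_range, ← Equiv.sum_comp Fin.revPerm]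
    simp [Algebra.smul_def]
  have hmul : (Matrix.of (Sum.elim (fun (i : Fin r) j => g j * aeval (z j) (p i))
      (fun (i : Fin s) j => aeval (z j) (w i.rev)))) =
      Matrix.fromBlocks T 0 0 W *
        (Matrix.of (Sum.elim (fun (i : Fin r) j => z j ^ (i.rev : ℕ) * g j)
          (fun (i : Fin s) j => z j ^ (i.rev : ℕ)))) := by
    ext i j
    rcases i with i | i
    · simp only [Matrix.mul_apply, Fintype.sum_sum_type, Matrix.of_apply, Sum.elim_inl,
        Sum.elim_inr, Matrix.fromBlocks_apply₁₁, Matrix.fromBlocks_apply₁₂, Matrix.zero_apply,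
        zero_mul, Finset.sum_const_zero, add_zero, hT]
      rw [hsum r _ _ ((hp i i.2).trans_lt i.2), Finset.mul_sum]
      exact Finset.sum_congr rfl fun l _ => by ring
    · simp only [Matrix.mul_apply, Fintype.sum_sum_type, Matrix.of_apply, Sum.elim_inl,
        Sum.elim_inr, Matrix.fromBlocks_apply₂₁, Matrix.fromBlocks_apply₂₂, Matrix.zero_apply,
        zero_mul, Finset.sum_const_zero, zero_add, hW]
      exact hsum s _ _ ((hw _ i.rev.2).trans_lt i.rev.2)
  rw [hmul, Matrix.det_mul, Matrix.det_fromBlocks_zero₂₁, hTdet, hWdet, mul_one]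

/-- Inserting a unit row at `q` and a unit column at the end changes the determinant by a sign. -/
theorem det_insertNth_snoc {R : Type*} [CommRing R] {n : ℕ} (M : Matrix (Fin n) (Fin n) R)
    (q : Fin (n + 1)) :
    (Matrix.of (q.insertNth (α := fun _ => Fin (n + 1) → R)
      (Fin.snoc (α := fun _ => R) (fun _ => 0) 1)
      (fun i => Fin.snoc (α := fun _ => R) (M i) 0))).det = (-1) ^ ((q : ℕ) + n) * M.det := by
  rw [Matrix.det_succ_column _ (Fin.last n), Fin.sum_univ_succAbove _ q]
  simp only [Matrix.of_apply, Fin.insertNth_apply_same, Fin.insertNth_apply_succAbove,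
    Fin.snoc_last, mul_zero, zero_mul, Finset.sum_const_zero, add_zero, mul_one, Fin.val_last]
  congr 2
  ext i j
  simp [Fin.snoc_castSucc]

theorem vmat_det {L : Type*} [Field L] {n : ℕ} (α : Fin n → L) :
    (vmat n α).det =
      (Equiv.Perm.sign (Fin.revPerm : Equiv.Perm (Fin n)) : ℤ) * (Matrix.vandermonde α).det := by
  have h : vmat n α = ((Matrix.vandermonde α)ᵀ).submatrix Fin.revPerm id := by
    ext i j
    simp [vmat, Matrix.vandermonde_apply, Fin.val_rev, Nat.sub_sub, add_comm]
  rw [h, Matrix.det_permute, Matrix.det_transpose]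

theorem vmat_det_ne_zero {L : Type*} [Field L] {n : ℕ} (α : Fin n → L)
    (hα : Function.Injective α) : (vmat n α).det ≠ 0 := by
  rw [vmat_det, sign_revPerm]
  exact mul_ne_zero (by simp) (Matrix.det_vandermonde_ne_zero_iff.mpr hα)

theorem det_eval_basis_eq_det_vmat {L : Type*} [Field L] {n : ℕ} (α : Fin n → L) (w : ℕ → L[X])
    (hw : IsGeneralBasis n w) :
    (Matrix.of fun i j : Fin n => (w (n - 1 - i)).eval (α j)).det = (vmat n α).det := by
  have h : (Matrix.of fun i j : Fin n => (w (n - 1 - i)).eval (α j)) =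
      ((Matrix.of fun i j : Fin n => (w j).eval (α i))ᵀ).submatrix Fin.revPerm id := by
    ext i j
    simp [Fin.val_rev, Nat.sub_sub, add_comm]
  rw [h, Matrix.det_permute, Matrix.det_transpose, vmat_det,
    Matrix.det_eval_matrixOfPolynomials_eq_det_vandermonde α (fun i : Fin n => w i)
      (fun i => (hw i i.2.le).2) (fun i => (hw i i.2.le).1)]

/-- The matrix of the first `q + 1` rows of `B`, augmented by rows expressing `w k, …, w 0`,
with an extra column inserted at position `q`. -/
def augmentedTop {L : Type*} [Field L] {n q k : ℕ} (hn : n = q + 1 + k)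
    (w : ℕ → L[X]) (B : Matrix (Fin n) (Fin n) L) :
    Matrix (Fin (q + 1) ⊕ Fin (k + 1)) (Fin (n + 1)) L[X] :=
  Matrix.of (Sum.elim
    (fun i => Fin.insertNth (α := fun _ => L[X]) (⟨q, by omega⟩ : Fin (n + 1)) 0
      (fun l => C (B ⟨i, by omega⟩ l)))
    (fun i => Fin.insertNth (α := fun _ => L[X]) (⟨q, by omega⟩ : Fin (n + 1)) (w i.rev)
      (Pi.single ⟨q + i, by omega⟩ 1)))

/-- The identification of the row blocks of sizes `q + 1` and `k + 1` with `Fin (n + 1)`. -/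
def blockEquiv {n q k : ℕ} (hn : n = q + 1 + k) : Fin (q + 1) ⊕ Fin (k + 1) ≃ Fin (n + 1) :=
  finSumFinEquiv.trans (finCongr (by omega))

theorem blockEquiv_inl_castSucc {n q k : ℕ} (hn : n = q + 1 + k) (l : Fin q) :
    blockEquiv hn (Sum.inl l.castSucc) =
      (⟨q, by omega⟩ : Fin (n + 1)).succAbove ⟨l, by omega⟩ := by
  ext
  simp [blockEquiv, Fin.succAbove, Fin.lt_def]

theorem blockEquiv_inl_last {n q k : ℕ} (hn : n = q + 1 + k) :
    blockEquiv hn (Sum.inl (Fin.last q)) = ⟨q, by omega⟩ := by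
  ext
  simp [blockEquiv]

theorem blockEquiv_inr {n q k : ℕ} (hn : n = q + 1 + k) (l : Fin (k + 1)) :
    blockEquiv hn (Sum.inr l) =
      (⟨q, by omega⟩ : Fin (n + 1)).succAbove ⟨q + l, by omega⟩ := by
  ext
  simp [blockEquiv, Fin.succAbove, Fin.lt_def]
  omega

theorem det_augmentedTop {L : Type*} [Field L] {n q k : ℕ} (hn : n = q + 1 + k)
    (w : ℕ → L[X]) (B : Matrix (Fin n) (Fin n) L) :
    ((augmentedTop hn w B).submatrix id (blockEquiv hn)).det =
      -∑ i : Fin (k + 1), C (Matrix.det (Matrix.of fun r c : Fin (q + 1) =>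
        if (c : ℕ) < q then B ⟨r, by omega⟩ ⟨c, by omega⟩
        else B ⟨r, by omega⟩ ⟨q + i, by omega⟩)) * w i.rev := by
  set A₁₂ : Matrix (Fin (q + 1)) (Fin (k + 1)) L[X] :=
    Matrix.of fun i l => C (B ⟨i, by omega⟩ ⟨q + l, by omega⟩)
  set A₁₁ : Matrix (Fin (q + 1)) (Fin (q + 1)) L[X] :=
    Matrix.of fun i => Fin.snoc (α := fun _ => L[X])
      (fun l : Fin q => C (B ⟨i, by omega⟩ ⟨l, by omega⟩)) 0
  set A₂₁ : Matrix (Fin (k + 1)) (Fin (q + 1)) L[X] :=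
    Matrix.of fun i => Fin.snoc (α := fun _ => L[X]) (fun _ : Fin q => 0) (w i.rev)
  have hblock : (augmentedTop hn w B).submatrix id (blockEquiv hn) =
      Matrix.fromBlocks A₁₁ A₁₂ A₂₁ 1 := by
    ext1 i j
    rcases i with i | i <;> rcases j with j | j
    · induction j using Fin.lastCases with
      | last => simp [augmentedTop, blockEquiv_inl_last, A₁₁]
      | cast j =>
        simp only [augmentedTop, Matrix.submatrix_apply, blockEquiv_inl_castSucc]
        simp [A₁₁]
    · simp only [augmentedTop, Matrix.submatrix_apply, blockEquiv_inr]
      simp [A₁₂]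
    · induction j using Fin.lastCases with
      | last => simp [augmentedTop, blockEquiv_inl_last, A₂₁]
      | cast j =>
        simp only [augmentedTop, Matrix.submatrix_apply, blockEquiv_inl_castSucc]
        simp [A₂₁, Pi.single_apply]
        omega
    · simp only [augmentedTop, Matrix.submatrix_apply, blockEquiv_inr]
      simp [Pi.single_apply, Matrix.one_apply, Fin.ext_iff, eq_comm]
  have hcol : A₁₁ - A₁₂ * A₂₁ = A₁₁.updateCol (Fin.last q)
      (-∑ i : Fin (k + 1), w i.rev • fun r => A₁₂ r i) := by
    ext1 r c
    induction c using Fin.lastCases with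
    | last => simp [A₁₁, A₂₁, Matrix.mul_apply, mul_comm]
    | cast c =>
      simp [A₁₁, A₂₁, Matrix.mul_apply, (Fin.castSucc_lt_last c).ne]
  rw [hblock, Matrix.det_fromBlocks_one₂₂, hcol, ← Matrix.cramer_apply, map_neg, map_sum]
  simp only [map_smul, Pi.neg_apply, Finset.sum_apply, Pi.smul_apply, smul_eq_mul,
    Matrix.cramer_apply]
  congr 1
  refine Finset.sum_congr rfl fun i _ => ?_
  rw [mul_comm, RingHom.map_det]
  congr 2
  ext1 r c
  induction c using Fin.lastCases with
  | last => simp [A₁₂]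
  | cast c => simp [A₁₁, (Fin.castSucc_lt_last c).ne]

/-- Evaluation matrix of the basis at the nodes, bordered by a unit row and a unit column. -/
def borderedEval {L : Type*} [Field L] {n : ℕ} (q : Fin (n + 1)) (α : Fin n → L) (w : ℕ → L[X]) :
    Matrix (Fin (n + 1)) (Fin (n + 1)) L[X] :=
  Matrix.of (q.insertNth (α := fun _ => Fin (n + 1) → L[X])
      (Fin.snoc (α := fun _ => L[X]) (fun _ => 0) 1)
      (fun i => Fin.snoc (α := fun _ => L[X]) (fun j => C ((w (n - 1 - i)).eval (α j))) 0))

theorem det_borderedEval {L : Type*} [Field L] {n : ℕ} (q : Fin (n + 1)) (α : Fin n → L)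
    (w : ℕ → L[X]) (hw : IsGeneralBasis n w) :
    (borderedEval q α w).det = (-1) ^ ((q : ℕ) + n) * C (vmat n α).det := by
  rw [borderedEval, ← det_eval_basis_eq_det_vmat α w hw, RingHom.map_det]
  exact det_insertNth_snoc _ q

theorem augmentedTop_mul_borderedEval {L : Type*} [Field L] {n q k : ℕ} (hn : n = q + 1 + k)
    (w : ℕ → L[X]) (B : Matrix (Fin n) (Fin n) L) (α : Fin n → L) :
    augmentedTop hn w B * borderedEval ⟨q, by omega⟩ α w =
      Matrix.of (Sum.elim
        (fun i : Fin (q + 1) => Fin.snoc (α := fun _ => L[X])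
          (fun j => C (∑ l, B ⟨i, by omega⟩ l * (w (n - 1 - l)).eval (α j))) 0)
        (fun (i : Fin (k + 1)) j => aeval (Fin.snoc (α := fun _ => L[X]) (fun j => C (α j)) X j : L[X])
          (w i.rev))) := by
  have hC : ∀ (a : L) (f : L[X]), aeval (C a) f = C (f.eval a) := fun a f =>
    (aeval_algebraMap_apply_eq_algebraMap_eval a f)
  ext1 i j
  rw [Matrix.mul_apply, Fin.sum_univ_succAbove _ (⟨q, by omega⟩ : Fin (n + 1))]
  rcases i with i | i <;> induction j using Fin.lastCases with
    | last => simp [augmentedTop, borderedEval]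
    | cast j =>
      have hk : k - (i : ℕ) = n - 1 - (q + i) := by omega
      simp [augmentedTop, borderedEval, Pi.single_apply, hC, Fin.val_rev, hk]

/-- The coefficient of `x ^ (n - 1 - i)` in `(p(x) - p(y)) / (x - y)`, as a polynomial in `y`. -/
def hornerPoly {L : Type*} [Field L] (n : ℕ) (p : L[X]) (i : ℕ) : L[X] :=
  ∑ t ∈ Finset.Icc (n - 1 - i + 1) n, C (p.coeff t) * X ^ (t - (n - 1 - i + 1))

theorem natDegree_hornerPoly_le {L : Type*} [Field L] {n : ℕ} (p : L[X]) {i : ℕ} (hi : i < n) :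
    (hornerPoly n p i).natDegree ≤ i := by
  refine natDegree_sum_le_of_forall_le _ _ fun t ht => ?_
  refine (natDegree_C_mul_X_pow_le _ _).trans ?_
  rw [Finset.mem_Icc] at ht
  omega

theorem coeff_hornerPoly_self {L : Type*} [Field L] {n : ℕ} (p : L[X]) {i : ℕ} (hi : i < n) :
    (hornerPoly n p i).coeff i = p.coeff n := by
  rw [hornerPoly, finsetSum_coeff, Finset.sum_eq_single n]
  · rw [coeff_C_mul, coeff_X_pow, if_pos (by omega), mul_one]
  · intro t ht htn
    rw [Finset.mem_Icc] at ht
    rw [coeff_C_mul, coeff_X_pow, if_neg (by omega), mul_zero]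
  · intro h
    exact absurd (Finset.mem_Icc.mpr ⟨by omega, le_rfl⟩) h

theorem coeff_divByMonic_eq_eval_hornerPoly {L : Type*} [Field L] {n : ℕ} (p : L[X])
    (hp : p.natDegree = n) (i : ℕ) (a : L) :
    (p /ₘ (X - C a)).coeff (n - 1 - i) = (hornerPoly n p i).eval a := by
  rw [coeff_divByMonic_X_sub_C, hp, hornerPoly, eval_finsetSum]
  exact Finset.sum_congr rfl fun t _ => by
    rw [eval_mul, eval_C, eval_pow, eval_X, mul_comm]

theorem det_weighted_vandermonde_eq {L : Type*} [Field L] {n q k : ℕ} (hn : n = q + 1 + k)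
    (w : ℕ → L[X]) (hw : IsGeneralBasis n w) (p : L[X]) (hp : p.natDegree = n)
    (α γ : Fin n → L) (B : Matrix (Fin n) (Fin n) L)
    (hrel : ∀ j, ∑ i : Fin n, w (n - 1 - i) *
      C (∑ l : Fin n, B i l * (w (n - 1 - l)).eval (α j)) = C (γ j) * (p /ₘ (X - C (α j))))
    (g z : Fin (q + 1) ⊕ Fin (k + 1) → L[X])
    (hg : ∀ j, g j = Fin.snoc (α := fun _ => L[X]) (fun j => C (γ j)) 0 (blockEquiv hn j))
    (hz : ∀ j, z j = Fin.snoc (α := fun _ => L[X]) (fun j => C (α j)) X (blockEquiv hn j)) :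
    (-1) ^ ((q + 1) * q / 2) * C (p.coeff n) ^ (q + 1) *
      (Matrix.of (Sum.elim (fun (i : Fin (q + 1)) j => z j ^ (i.rev : ℕ) * g j)
        (fun (i : Fin (k + 1)) j => z j ^ (i.rev : ℕ)))).det =
    (-1) ^ k * C (vmat n α).det *
      ∑ i : Fin (k + 1), C (Matrix.det (Matrix.of fun r c : Fin (q + 1) =>
        if (c : ℕ) < q then B ⟨r, by omega⟩ ⟨c, by omega⟩
        else B ⟨r, by omega⟩ ⟨q + i, by omega⟩)) * w i.rev := by
  have hred := det_weighted_aeval g z (hornerPoly n p) w (p.coeff n)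
    (fun i hi => natDegree_hornerPoly_le p (by omega))
    (fun i hi => coeff_hornerPoly_self p (by omega))
    (fun i hi => (hw i (by omega)).2.le)
    (fun i hi => by
      have h := hw i (by omega)
      simpa [h.2] using h.1.coeff_natDegree)
  rw [algebraMap_eq, Nat.add_sub_cancel] at hred
  rw [← hred]
  set A : Matrix (Fin (q + 1)) (Fin (q + 1)) L[X] :=
    Matrix.of fun i l => C ((w (n - 1 - l)).coeff (n - 1 - i)) with hA
  have hAdet : A.det = 1 := by
    rw [Matrix.det_of_isLowerTriangular]
    · refine Finset.prod_eq_one fun i _ => ?_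
      have h := hw (n - 1 - i) (by omega)
      have h1 := h.1.coeff_natDegree
      rw [h.2] at h1
      simp [A, h1]
    · intro i l hil
      have hil' : i < l := hil
      simp only [A, Matrix.of_apply]
      rw [coeff_eq_zero_of_natDegree_lt, map_zero]
      rw [(hw (n - 1 - l) (by omega)).2]
      omega
  have htop : ∀ (i : Fin (q + 1)) (j : Fin n),
      ∑ l : Fin (q + 1), (w (n - 1 - l)).coeff (n - 1 - i) *
        ∑ t : Fin n, B ⟨l, by omega⟩ t * (w (n - 1 - t)).eval (α j) =
      γ j * (hornerPoly n p i).eval (α j) := by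
    intro i j
    have h := congrArg (fun f => f.coeff (n - 1 - i)) (hrel j)
    simp only [finsetSum_coeff, coeff_mul_C, coeff_C_mul,
      coeff_divByMonic_eq_eval_hornerPoly p hp] at h
    rw [← h]
    subst hn
    rw [Fin.sum_univ_add (a := q + 1) (b := k)]
    refine (add_eq_left.mpr (Finset.sum_eq_zero fun l _ => ?_)).symm
    rw [coeff_eq_zero_of_natDegree_lt, zero_mul]
    rw [(hw _ (by omega)).2, Fin.val_natAdd]
    omega
  have hC : ∀ (a : L) (f : L[X]), aeval (C a) f = C (f.eval a) :=
    fun a f => aeval_algebraMap_apply_eq_algebraMap_eval a f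
  have hmul : (Matrix.of (Sum.elim
      (fun (i : Fin (q + 1)) j => g j * aeval (z j) (hornerPoly n p i))
      (fun (i : Fin (k + 1)) j => aeval (z j) (w i.rev)))) =
      Matrix.fromBlocks A 0 0 1 * ((augmentedTop hn w B).submatrix id (blockEquiv hn) *
        (borderedEval ⟨q, by omega⟩ α w).submatrix (blockEquiv hn) (blockEquiv hn)) := by
    rw [Matrix.submatrix_mul_equiv, augmentedTop_mul_borderedEval]
    ext1 i j
    rw [Matrix.mul_apply, Fintype.sum_sum_type]
    rcases i with i | i
    · simp only [Matrix.of_apply, Sum.elim_inl, Matrix.fromBlocks_apply₁₁,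
        Matrix.fromBlocks_apply₁₂, Matrix.zero_apply, zero_mul, Finset.sum_const_zero, add_zero,
        Matrix.submatrix_apply, id, hg, hz, hA]
      generalize blockEquiv hn j = j
      induction j using Fin.lastCases with
      | last => simp
      | cast j =>
        simp only [Fin.snoc_castSucc, hC, ← C_mul, ← map_sum, htop]
    · simp only [Matrix.of_apply, Sum.elim_inr, Matrix.fromBlocks_apply₂₁,
        Matrix.fromBlocks_apply₂₂, Matrix.zero_apply, zero_mul, Finset.sum_const_zero, zero_add,
        Matrix.submatrix_apply, id, hz, Matrix.one_apply, ite_mul, one_mul, Finset.sum_ite_eq,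
        Finset.mem_univ, if_true]
  rw [hmul, Matrix.det_mul, Matrix.det_mul, Matrix.det_fromBlocks_zero₂₁, hAdet, Matrix.det_one,
    Matrix.det_submatrix_equiv_self, det_augmentedTop, det_borderedEval _ _ _ hw]
  have hsign : (-1 : L[X]) ^ (q + n) = -(-1) ^ k := by
    rw [hn, show q + (q + 1 + k) = 2 * q + (k + 1) by ring, pow_add, pow_mul]
    simp [pow_succ]
  simp only [hsign]
  ring

theorem BezoutRelation.eval_root {K L : Type*} [Field K] [Field L] [Algebra K L] {n : ℕ}
    {ω : ℕ → K[X]} {P Q : K[X]} {B : Matrix (Fin n) (Fin n) K} (hB : BezoutRelation n ω P Q B)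
    (x : L) (hx : aeval x P = 0) :
    ∑ i : Fin n, (ω (n - 1 - i)).map (algebraMap K L) *
      C (∑ l : Fin n, algebraMap K L (B i l) *
        ((ω (n - 1 - l)).map (algebraMap K L)).eval x) =
    C (aeval x Q) * (P.map (algebraMap K L) /ₘ (X - C x)) := by
  have h := congrArg (Polynomial.map (aeval x : K[X] →ₐ[K] L).toRingHom) hB
  have hcomp : (aeval x : K[X] →ₐ[K] L).toRingHom.comp C = algebraMap K L := by
    ext; simp
  have hcoe : ∀ f : K[X], (aeval x : K[X] →ₐ[K] L).toRingHom f = aeval x f := fun _ => rfl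
  simp only [Polynomial.map_sub, Polynomial.map_mul, Polynomial.map_sum, Polynomial.map_map,
    hcomp, map_C, map_X, hcoe, hx, map_zero, zero_mul, sub_zero, aeval_X, aeval_C] at h
  have hroot : (P.map (algebraMap K L)).IsRoot x := by
    rwa [IsRoot, eval_map_algebraMap]
  refine mul_left_cancel₀ (X_sub_C_ne_zero x) ?_
  rw [mul_left_comm, mul_divByMonic_eq_iff_isRoot.mpr hroot, mul_comm (C _), h]
  congr 1
  refine Finset.sum_congr rfl fun i _ => ?_
  rw [map_sum, Finset.mul_sum]
  refine Finset.sum_congr rfl fun l _ => ?_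
  rw [eval_map_algebraMap, C_mul]
  ring

theorem IsGeneralBasis.map {K L : Type*} [Field K] [Field L] [Algebra K L] {n : ℕ}
    {ω : ℕ → K[X]} (hω : IsGeneralBasis n ω) :
    IsGeneralBasis n fun i => (ω i).map (algebraMap K L) := fun i hi =>
  ⟨(hω i hi).1.map _, by rw [natDegree_map, (hω i hi).2]⟩

theorem det_subresNum {K L : Type*} [Field K] [Field L] [Algebra K L] {n q k : ℕ}
    (hn : n = q + 1 + k) (α : Fin n → L) (G : K[X])
    (g z : Fin (q + 1) ⊕ Fin (k + 1) → L[X])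
    (hg : ∀ j, g j =
      Fin.snoc (α := fun _ => L[X]) (fun j => C (aeval (α j) G)) 0 (blockEquiv hn j))
    (hz : ∀ j, z j = Fin.snoc (α := fun _ => L[X]) (fun j => C (α j)) X (blockEquiv hn j)) :
    (subresNum n k α G).det =
      (Matrix.of (Sum.elim (fun (i : Fin (q + 1)) j => z j ^ (i.rev : ℕ) * g j)
        (fun (i : Fin (k + 1)) j => z j ^ (i.rev : ℕ)))).det := by
  rw [← Matrix.det_submatrix_equiv_self (blockEquiv hn)]
  congr 1
  ext1 i j
  have hgj := hg j
  have hzj := hz j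
  simp only [Matrix.submatrix_apply, subresNum]
  generalize blockEquiv hn j = c at hgj hzj ⊢
  rcases i with i | i
  · have hi : (blockEquiv hn (Sum.inl i) : ℕ) = i := by simp [blockEquiv]
    have hi' : (i : ℕ) < n - k := by omega
    have he : n - k - 1 - (i : ℕ) = i.rev := by rw [Fin.val_rev]; omega
    induction c using Fin.lastCases with
    | last => simp only [Fin.snoc_last] at hgj; simp [hi, hi', hgj]
    | cast c => simp [hi, hi', he, hgj, hzj]
  · have hi : (blockEquiv hn (Sum.inr i) : ℕ) = q + 1 + i := by simp [blockEquiv]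
    have hi' : ¬ q + 1 + (i : ℕ) < n - k := by omega
    have he : n - (q + 1 + (i : ℕ)) = i.rev := by rw [Fin.val_rev]; omega
    induction c using Fin.lastCases with
    | last => simp [hi, hi', he, hzj]
    | cast c => simp [hi, hi', he, hzj]

theorem map_detp_topRows {K L : Type*} [Field K] [Field L] [Algebra K L] {n q k : ℕ}
    (hn : n = q + 1 + k) (hkn : k < n) (ω : ℕ → K[X]) (B : Matrix (Fin n) (Fin n) K) :
    (_root_.detp hkn ω (topRows n k B)).map (algebraMap K L) =
      ∑ i : Fin (k + 1), C (Matrix.det (Matrix.of fun r c : Fin (q + 1) =>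
        if (c : ℕ) < q then algebraMap K L (B ⟨r, by omega⟩ ⟨c, by omega⟩)
        else algebraMap K L (B ⟨r, by omega⟩ ⟨q + i, by omega⟩))) *
          (ω i.rev).map (algebraMap K L) := by
  rw [_root_.detp, Polynomial.map_sum, Finset.sum_range, ← Equiv.sum_comp Fin.revPerm]
  refine Finset.sum_congr rfl fun i _ => ?_
  rw [Polynomial.map_mul, map_C, Fin.revPerm_apply, RingHom.map_det,
    ← Matrix.det_submatrix_equiv_self (finCongr (show q + 1 = n - k by omega))]
  congr 3
  ext1 r c
  have hq : n - k - 1 = q := by omega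
  have hi : n - 1 - (i.rev : ℕ) = q + i := by rw [Fin.val_rev]; omega
  simp only [RingHom.mapMatrix_apply, Matrix.submatrix_apply, Matrix.map_apply, Matrix.of_apply,
    topRows, hq, hi, finCongr_apply, Fin.val_cast, apply_ite (algebraMap K L)]

theorem bezout_subresultant_of_roots {K L : Type*} [Field K] [Field L] [Algebra K L]
    {n m k : ℕ} (hmn : m < n) (hkm : k ≤ m) (hkn : k < n) {ω : ℕ → K[X]}
    (hω : IsGeneralBasis n ω) {P : K[X]} (Q : K[X]) (c : K) (hdegP : P.natDegree = n)
    (α : Fin n → L)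
    (hfact : P.map (algebraMap K L) = C (algebraMap K L c) * ∏ j : Fin n, (X - C (α j)))
    (hdist : Function.Injective α) {B : Matrix (Fin n) (Fin n) K}
    (hB : BezoutRelation n ω P Q B) :
    C (algebraMap K L c ^ (n - m)) * subresPoly n m k c α Q =
      (-1 : L[X]) ^ ((n - k) * (n - k - 1) / 2) *
        (_root_.detp hkn ω (topRows n k B)).map (algebraMap K L) := by
  obtain ⟨q, hn⟩ : ∃ q, n = q + 1 + k := ⟨n - k - 1, by omega⟩
  have hlead : (P.map (algebraMap K L)).coeff n = algebraMap K L c := by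
    have hnat : (P.map (algebraMap K L)).natDegree = n := by rw [natDegree_map, hdegP]
    have h := congrArg leadingCoeff hfact
    rwa [leadingCoeff, hnat, leadingCoeff_mul, leadingCoeff_C,
      (monic_prod_of_monic _ _ fun j _ => monic_X_sub_C (α j)).leadingCoeff, mul_one] at h
  have hroot : ∀ j, aeval (α j) P = 0 := by
    intro j
    rw [← eval_map_algebraMap, hfact, eval_mul, eval_prod,
      Finset.prod_eq_zero (Finset.mem_univ j) (by simp), mul_zero]
  have hcore := det_weighted_vandermonde_eq hn (fun i => (ω i).map (algebraMap K L)) hω.map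
    (P.map (algebraMap K L)) (by rw [natDegree_map, hdegP]) α (fun j => aeval (α j) Q)
    (B.map (algebraMap K L)) (fun j => hB.eval_root (α j) (hroot j)) _ _
    (fun _ => rfl) (fun _ => rfl)
  rw [← det_subresNum hn α Q _ _ (fun _ => rfl) (fun _ => rfl), hlead] at hcore
  simp only [Matrix.map_apply] at hcore
  rw [← map_detp_topRows hn hkn] at hcore
  have hV := vmat_det_ne_zero α hdist
  have hexp : n - k = q + 1 := by omega
  have hpow : algebraMap K L c ^ (q + 1) =
      algebraMap K L c ^ (n - m) * algebraMap K L c ^ (m - k) := by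
    rw [← pow_add]
    congr 1
    omega
  have hsq : ∀ t : ℕ, (-1 : L[X]) ^ t * (-1) ^ t = 1 := fun t => by
    rw [← mul_pow]
    simp
  have hscalar : C (vmat n α).det * (C (algebraMap K L c ^ (n - m)) *
      C ((-1) ^ k * algebraMap K L c ^ (m - k) / (vmat n α).det)) =
      (-1) ^ k * C (algebraMap K L c) ^ (q + 1) := by
    rw [← C_mul, ← C_mul, ← C_pow, hpow, show (-1 : L[X]) ^ k = C ((-1) ^ k) by simp, ← C_mul]
    congr 1
    field_simp
  rw [subresPoly, show (n - k) * (n - k - 1) / 2 = (q + 1) * q / 2 by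
    rw [hexp, Nat.add_sub_cancel]]
  refine mul_left_cancel₀ (C_ne_zero.mpr hV) ?_
  generalize (q + 1) * q / 2 = s at hcore ⊢
  linear_combination (subresNum n k α Q).det * hscalar + (-1) ^ k * (-1) ^ s * hcore -
    (-1) ^ k * C (algebraMap K L c) ^ (q + 1) * (subresNum n k α Q).det * hsq s +
    (-1) ^ s * C (vmat n α).det *
      (_root_.detp hkn ω (topRows n k B)).map (algebraMap K L) * hsq k

/-- Main theorem, denominator-free form: for a general basis `ω`,
`F = Σ aᵢ ωᵢ` of degree `n` with squarefree `F`, `G = Σ bᵢ ωᵢ` of degree `m < n`,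
and `0 ≤ k ≤ m`, one has
`aₙ^{n−m} · S_k = (−1)^{(n−k)(n−k−1)/2} · detp_ω (B_{ω,k})` in `F̄[x]`. -/
theorem bezout_subresultant_general_basis
    {K : Type*} [Field K] (n m k : ℕ) (hmn : m < n) (hkm : k ≤ m)
    (ω : ℕ → Polynomial K) (hω : IsGeneralBasis n ω)
    (a b : ℕ → K) (P Q : Polynomial K)
    (hP : P = ∑ i ∈ Finset.range (n + 1), Polynomial.C (a i) * ω i)
    (hQ : Q = ∑ i ∈ Finset.range (m + 1), Polynomial.C (b i) * ω i)
    (han : a n ≠ 0) (hbm : b m ≠ 0)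
    (hdegP : P.natDegree = n) (hdegQ : Q.natDegree = m)
    (α : Fin n → AlgebraicClosure K)
    (hfact : P.map (algebraMap K (AlgebraicClosure K)) =
      Polynomial.C (algebraMap K (AlgebraicClosure K) (a n)) *
        ∏ j : Fin n, (Polynomial.X - Polynomial.C (α j)))
    (hdist : Function.Injective α)
    (B : Matrix (Fin n) (Fin n) K) (hB : BezoutRelation n ω P Q B) :
    Polynomial.C (algebraMap K (AlgebraicClosure K) (a n) ^ (n - m)) *
        subresPoly n m k (a n) α Q =
      (-1 : Polynomial (AlgebraicClosure K)) ^ ((n - k) * (n - k - 1) / 2) *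
        (detp (lt_of_le_of_lt hkm hmn) ω (topRows n k B)).map
          (algebraMap K (AlgebraicClosure K)) := by
  exact bezout_subresultant_of_roots hmn hkm _ hω Q (a n) hdegP α hfact hdist hB
end
end

section
/- Let F, G ∈ F[x] with deg F = n > deg G = m ≥ 0, and assume the roots α_1, …, α_n ∈ F̄ of F are pairwise distinct. For 0 ≤ k ≤ m, let S_k be the k-th subresultant polynomial of F and G and let s_k be the coefficient of x^k in S_k. Then for every 0 ≤ k ≤ m, the degree of gcd(F, G) equals k if and only if s_0 = s_1 = ⋯ = s_{k−1} = 0 and s_k ≠ 0; moreover, if deg gcd(F, G) = k, then S_k is a greatest common divisor of F and G in F̄[x] (i.e., S_k is a nonzero constant multiple of gcd(F, G)). -/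
open Polynomial Matrix BigOperators
open scoped Classical

noncomputable section

/-- The scalar matrix whose determinant is, up to sign, the coefficient of `X ^ k` in `(subresNum n k α G).det`. -/
def subresMinor {L : Type*} [Field L] (n k : ℕ) (α : Fin n → L) (g : Polynomial L) :
    Matrix (Fin n) (Fin n) L :=
  Matrix.of fun i j =>
    if (i : ℕ) < n - k then α j ^ (n - k - 1 - (i : ℕ)) * g.eval (α j)
    else α j ^ (n - 1 - (i : ℕ))

section

variable {L : Type*} [Field L]

theorem sum_mul_subresMinor {n k : ℕ} (hk : k ≤ n) (α : Fin n → L) (g : Polynomial L)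
    (w : ℕ → L) (j : Fin n) :
    ∑ i : Fin n, w i * subresMinor n k α g i j =
      (∑ e ∈ Finset.range (n - k), w (n - k - 1 - e) * α j ^ e) * g.eval (α j) +
        ∑ e ∈ Finset.range k, w (n - 1 - e) * α j ^ e := by
  have key := Fin.sum_univ_eq_sum_range (fun i => w i *
    (if i < n - k then α j ^ (n - k - 1 - i) * g.eval (α j) else α j ^ (n - 1 - i))) n
  simp only [subresMinor, Matrix.of_apply]
  rw [key, ← Finset.sum_range_add_sum_Ico _ (Nat.sub_le n k), Finset.sum_Ico_eq_sum_range,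
    Nat.sub_sub_self hk, Finset.sum_mul]
  congr 1
  · rw [← Finset.sum_range_reflect]
    refine Finset.sum_congr rfl fun e he => ?_
    have he' := Finset.mem_range.1 he
    rw [if_pos (by omega), Nat.sub_sub_self (by omega), mul_assoc]
  · rw [← Finset.sum_range_reflect]
    refine Finset.sum_congr rfl fun e he => ?_
    have he' := Finset.mem_range.1 he
    rw [if_neg (by omega), show n - k + (k - 1 - e) = n - 1 - e by omega,
      Nat.sub_sub_self (by omega)]

/-- A singular minor is the same as a nontrivial relation `A * g + B = 0` at all the `α j`. -/
theorem det_subresMinor_eq_zero_iff {n k : ℕ} (hk : k ≤ n) (α : Fin n → L)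
    (g : Polynomial L) :
    (subresMinor n k α g).det = 0 ↔
      ∃ A B : Polynomial L, (A ≠ 0 ∨ B ≠ 0) ∧ A.degree < (n - k : ℕ) ∧ B.degree < k ∧
        ∀ j, (A * g + B).eval (α j) = 0 := by
  rw [← Matrix.exists_vecMul_eq_zero_iff]
  constructor
  · rintro ⟨v, hv, hv0⟩
    let w : ℕ → L := fun t => if h : t < n then v ⟨t, h⟩ else 0
    have hw : ∀ i : Fin n, w i = v i := fun i => by simp [w]
    refine ⟨∑ e ∈ Finset.range (n - k), C (w (n - k - 1 - e)) * X ^ e,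
      ∑ e ∈ Finset.range k, C (w (n - 1 - e)) * X ^ e, ?_, ?_, ?_, ?_⟩
    · by_contra! h
      apply hv
      ext i
      obtain ⟨hA, hB⟩ := h
      rw [← hw, Pi.zero_apply]
      by_cases hi : (i : ℕ) < n - k
      · have := congrArg (fun p => p.coeff (n - k - 1 - i)) hA
        simp only [finsetSum_coeff, coeff_C_mul_X_pow, coeff_zero, Finset.sum_ite_eq,
          Finset.mem_range] at this
        rwa [if_pos (by omega), Nat.sub_sub_self (by omega)] at this
      · have := congrArg (fun p => p.coeff (n - 1 - i)) hB
        simp only [finsetSum_coeff, coeff_C_mul_X_pow, coeff_zero, Finset.sum_ite_eq,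
          Finset.mem_range] at this
        rwa [if_pos (by omega), Nat.sub_sub_self (by omega)] at this
    · rw [← mem_degreeLT]
      refine Submodule.sum_mem _ fun e he => mem_degreeLT.2 ?_
      exact (degree_C_mul_X_pow_le _ _).trans_lt (by exact_mod_cast Finset.mem_range.1 he)
    · rw [← mem_degreeLT]
      refine Submodule.sum_mem _ fun e he => mem_degreeLT.2 ?_
      exact (degree_C_mul_X_pow_le _ _).trans_lt (by exact_mod_cast Finset.mem_range.1 he)
    · intro j
      have h := congrFun hv0 j
      simp only [Matrix.vecMul, dotProduct, Pi.zero_apply, ← hw] at h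
      rw [sum_mul_subresMinor hk] at h
      simpa [eval_finsetSum] using h
  · rintro ⟨A, B, hAB, hA, hB, h⟩
    let w : ℕ → L := fun t => if t < n - k then A.coeff (n - k - 1 - t) else B.coeff (n - 1 - t)
    have hwA : ∀ e < n - k, w (n - k - 1 - e) = A.coeff e := fun e he => by
      simp only [w]
      rw [if_pos (by omega), Nat.sub_sub_self (by omega)]
    have hwB : ∀ e < k, w (n - 1 - e) = B.coeff e := fun e he => by
      simp only [w]
      rw [if_neg (by omega), Nat.sub_sub_self (by omega)]
    have heval : ∀ (p : Polynomial L) (r : ℕ) (x : L), p.degree < r →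
        p.eval x = ∑ e ∈ Finset.range r, p.coeff e * x ^ e := fun p r x hp => by
      rcases eq_or_ne p 0 with rfl | hp0
      · simp
      · exact eval_eq_sum_range' ((natDegree_lt_iff_degree_lt hp0).2 hp) x
    refine ⟨fun i => w i, fun hw0 => ?_, ?_⟩
    · have hw0' : ∀ t < n, w t = 0 := fun t ht => congrFun hw0 ⟨t, ht⟩
      rcases hAB with hA0 | hB0
      · refine hA0 (ext fun e => ?_)
        by_cases he : e < n - k
        · rw [← hwA e he, hw0' _ (by omega), coeff_zero]
        · exact coeff_eq_zero_of_degree_lt (hA.trans_le (by exact_mod_cast not_lt.1 he))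
      · refine hB0 (ext fun e => ?_)
        by_cases he : e < k
        · rw [← hwB e he, hw0' _ (by omega), coeff_zero]
        · exact coeff_eq_zero_of_degree_lt (hB.trans_le (by exact_mod_cast not_lt.1 he))
    · ext j
      simp only [Matrix.vecMul, dotProduct, Pi.zero_apply]
      rw [sum_mul_subresMinor hk, ← h j, eval_add, eval_mul, heval A _ _ hA, heval B _ _ hB]
      congr 1
      · congr 1
        exact Finset.sum_congr rfl fun e he => by rw [hwA e (Finset.mem_range.1 he)]
      · exact Finset.sum_congr rfl fun e he => by rw [hwB e (Finset.mem_range.1 he)]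

theorem dvd_of_forall_eval_eq_zero {n : ℕ} {α : Fin n → L} (hα : Function.Injective α)
    {R : Polynomial L} (h : ∀ j, R.eval (α j) = 0) : ∏ j, (X - C (α j)) ∣ R :=
  Finset.prod_dvd_of_coprime (fun _ _ _ _ hij => pairwise_coprime_X_sub_C hα hij)
    fun j _ => dvd_iff_isRoot.2 (h j)

theorem det_vmat_ne_zero {n : ℕ} {α : Fin n → L} (hα : Function.Injective α) :
    (vmat n α).det ≠ 0 := by
  have h : vmat n α = ((Matrix.vandermonde α)ᵀ).submatrix Fin.revPerm id := by
    ext i j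
    simp only [vmat, Matrix.of_apply, Matrix.submatrix_apply, Matrix.transpose_apply,
      Matrix.vandermonde_apply, Fin.revPerm_apply, Fin.val_rev, id]
    congr 1
    omega
  rw [h, Matrix.det_permute, Matrix.det_transpose]
  refine mul_ne_zero ?_ (Matrix.det_vandermonde_ne_zero_iff.2 hα)
  rcases Int.units_eq_one_or (Equiv.Perm.sign (Fin.revPerm : Equiv.Perm (Fin n))) with h | h <;>
    simp [h]

/-- The cofactors of the last column of `subresNum`. -/
def subresCofactor (n k : ℕ) (α : Fin n → L) (g : Polynomial L) (i : Fin (n + 1)) : L :=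
  (-1) ^ ((i : ℕ) + n) * (Matrix.of fun r j : Fin n =>
    if (i.succAbove r : ℕ) < n - k then
      α j ^ (n - k - 1 - (i.succAbove r : ℕ)) * g.eval (α j)
    else α j ^ (n - (i.succAbove r : ℕ))).det

theorem subresCofactor_eq {n k : ℕ} (α : Fin n → L) (g : Polynomial L)
    (i : Fin (n + 1)) (hi : (i : ℕ) = n - k) :
    subresCofactor n k α g i = (-1) ^ ((i : ℕ) + n) * (subresMinor n k α g).det := by
  rw [subresCofactor]
  congr 2
  ext r j
  simp only [subresMinor, Matrix.of_apply]
  by_cases hr : (r : ℕ) < n - k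
  · rw [Fin.succAbove_of_castSucc_lt _ _ (by rw [Fin.lt_def, Fin.val_castSucc]; omega),
      Fin.val_castSucc, if_pos hr, if_pos hr]
  · rw [Fin.succAbove_of_le_castSucc _ _ (by rw [Fin.le_def, Fin.val_castSucc]; omega),
      Fin.val_succ, if_neg (by omega), if_neg hr]
    congr 1
    omega

section

variable {K : Type*} [Field K] [Algebra K L]

theorem det_subresNum_s8 (n k : ℕ) (α : Fin n → L) (G : Polynomial K) :
    (subresNum n k α G).det =
      ∑ i : Fin (n + 1), if (i : ℕ) < n - k then 0 else
        C (subresCofactor n k α (G.map (algebraMap K L)) i) * X ^ (n - (i : ℕ)) := by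
  rw [Matrix.det_succ_column _ (Fin.last n)]
  refine Finset.sum_congr rfl fun i _ => ?_
  have hlast : subresNum n k α G i (Fin.last n) =
      if (i : ℕ) < n - k then 0 else X ^ (n - (i : ℕ)) := by
    simp [subresNum]
  rw [hlast]
  split_ifs with hi
  · simp
  · rw [subresCofactor, C_mul, RingHom.map_det, mul_right_comm]
    congr 2
    · simp
    · congr 1
      ext1 r j
      simp only [subresNum, Matrix.submatrix_apply, Matrix.of_apply, RingHom.mapMatrix_apply,
        Matrix.map_apply, Fin.succAbove_last, Fin.val_castSucc, Fin.is_lt, dite_true, Fin.eta,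
        eval_map_algebraMap]
      split_ifs <;> rfl

theorem natDegree_det_subresNum_le {n k : ℕ} (hk : k ≤ n) (α : Fin n → L)
    (G : Polynomial K) : (subresNum n k α G).det.natDegree ≤ k := by
  rw [det_subresNum_s8]
  refine natDegree_sum_le_of_forall_le _ _ fun i _ => ?_
  split_ifs with hi
  · simp
  · exact (natDegree_C_mul_X_pow_le _ _).trans (by omega)

theorem coeff_det_subresNum {n k : ℕ} (hk : k ≤ n) (α : Fin n → L) (G : Polynomial K) :
    (subresNum n k α G).det.coeff k =
      (-1) ^ (n - k + n) * (subresMinor n k α (G.map (algebraMap K L))).det := by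
  rw [det_subresNum_s8, finsetSum_coeff, Finset.sum_eq_single ⟨n - k, by omega⟩]
  · rw [if_neg (by simp), subresCofactor_eq _ _ _ rfl]
    simp only [coeff_C_mul_X_pow]
    rw [if_pos (by omega)]
  · intro i _ hi
    have hi' : (i : ℕ) ≠ n - k := fun h => hi (Fin.ext h)
    split_ifs with h
    · simp
    · rw [coeff_C_mul_X_pow, if_neg (by omega)]
  · simp

theorem eval_det_subresNum {n k : ℕ} (α : Fin n → L) (G : Polynomial K) (j : Fin n)
    (hj : aeval (α j) G = 0) : (subresNum n k α G).det.eval (α j) = 0 := by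
  rw [← coe_evalRingHom, RingHom.map_det]
  refine Matrix.det_zero_of_column_eq (Fin.castSucc_lt_last j).ne fun i => ?_
  simp only [RingHom.mapMatrix_apply, Matrix.map_apply, subresNum, Matrix.of_apply,
    Fin.val_castSucc, Fin.is_lt, dite_true, Fin.eta, hj, Fin.val_last, lt_irrefl, dite_false]
  split_ifs <;> simp

end

/-- The top minors vanish below the degree of a common divisor. -/
theorem det_subresMinor_eq_zero_of_lt {n k : ℕ} (α : Fin n → L) {f g d : Polynomial L}
    (hf : ∀ j, f.eval (α j) = 0) (hf0 : f ≠ 0) (hfn : f.natDegree = n) (hdf : d ∣ f)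
    (hdg : d ∣ g) (hk : k < d.natDegree) : (subresMinor n k α g).det = 0 := by
  obtain ⟨f', rfl⟩ := hdf
  obtain ⟨g', rfl⟩ := hdg
  have hd0 := left_ne_zero_of_mul hf0
  have hf'0 := right_ne_zero_of_mul hf0
  rw [natDegree_mul hd0 hf'0] at hfn
  refine (det_subresMinor_eq_zero_iff (by omega) α _).2
    ⟨f', 0, Or.inl hf'0, ?_, by simp, fun j => ?_⟩
  · rw [← natDegree_lt_iff_degree_lt hf'0]
    omega
  · have h := hf j
    rw [eval_mul] at h
    rw [add_zero, eval_mul, eval_mul, ← mul_assoc, mul_comm (eval (α j) f'), h, zero_mul]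

/-- The top minor at the degree of the gcd does not vanish. -/
theorem det_subresMinor_natDegree_gcd_ne_zero {n : ℕ} (α : Fin n → L) {f g : Polynomial L}
    (hf : ∀ R : Polynomial L, (∀ j, R.eval (α j) = 0) → f ∣ R) (hf0 : f ≠ 0)
    (hfn : f.natDegree = n) :
    (subresMinor n (EuclideanDomain.gcd f g).natDegree α g).det ≠ 0 := by
  set d := EuclideanDomain.gcd f g with hd
  obtain ⟨f', hf'⟩ := EuclideanDomain.gcd_dvd_left f g
  obtain ⟨g', hg'⟩ := EuclideanDomain.gcd_dvd_right f g
  rw [← hd] at hf' hg'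
  have hd0 : d ≠ 0 := by rintro h; simp [h] at hf'; exact hf0 hf'
  have hf'0 : f' ≠ 0 := by rintro rfl; simp at hf'; exact hf0 hf'
  have hdeg : d.natDegree + f'.natDegree = n := by rw [← natDegree_mul hd0 hf'0, ← hf', hfn]
  have hcop : IsCoprime f' g' := by
    have hbez := EuclideanDomain.gcd_eq_gcd_ab f g
    rw [← hd] at hbez
    refine ⟨EuclideanDomain.gcdA f g, EuclideanDomain.gcdB f g, mul_left_cancel₀ hd0 ?_⟩
    linear_combination -hbez - EuclideanDomain.gcdA f g * hf' - EuclideanDomain.gcdB f g * hg'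
  intro h
  obtain ⟨A, B, hAB, hA, hB, hrel⟩ := (det_subresMinor_eq_zero_iff (by omega) α g).1 h
  have hdvd := hf _ hrel
  have hdB : d ∣ B := (dvd_add_right (Dvd.intro_left (A * g') (by rw [hg']; ring))).1
    ((Dvd.intro _ hf'.symm).trans hdvd)
  have hB0 : B = 0 := eq_zero_of_dvd_of_degree_lt hdB (by rwa [degree_eq_natDegree hd0])
  rw [hB0, add_zero, hf', hg', mul_left_comm] at hdvd
  have hA0 : A = 0 := by
    refine eq_zero_of_dvd_of_degree_lt
      (hcop.dvd_of_dvd_mul_right ((mul_dvd_mul_iff_left hd0).1 hdvd)) ?_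
    rwa [degree_eq_natDegree hf'0, show f'.natDegree = n - d.natDegree by omega]
  exact hAB.elim (· hA0) (· hB0)

end

/-- the subresultants `s_k` detect the degree of `gcd(F,G)`, and if
`deg gcd(F,G) = k` then `S_k` is a greatest common divisor of `F` and `G` in `F̄[x]`
(a nonzero constant multiple of the gcd). -/
theorem subresultant_gcd_criterion
    {K : Type*} [Field K] (n m : ℕ) (hmn : m < n)
    (P Q : Polynomial K) (hQ0 : Q ≠ 0)
    (hdegP : P.natDegree = n) (hdegQ : Q.natDegree = m)
    (α : Fin n → AlgebraicClosure K)
    (hfact : P.map (algebraMap K (AlgebraicClosure K)) =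
      Polynomial.C (algebraMap K (AlgebraicClosure K) P.leadingCoeff) *
        ∏ j : Fin n, (Polynomial.X - Polynomial.C (α j)))
    (hdist : Function.Injective α) :
    ∀ k ≤ m,
      ((EuclideanDomain.gcd (P.map (algebraMap K (AlgebraicClosure K)))
            (Q.map (algebraMap K (AlgebraicClosure K)))).natDegree = k ↔
        (∀ j < k, (subresPoly n m j P.leadingCoeff α Q).coeff j = 0) ∧
          (subresPoly n m k P.leadingCoeff α Q).coeff k ≠ 0) ∧
      ((EuclideanDomain.gcd (P.map (algebraMap K (AlgebraicClosure K)))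
            (Q.map (algebraMap K (AlgebraicClosure K)))).natDegree = k →
        ∃ c : AlgebraicClosure K, c ≠ 0 ∧
          subresPoly n m k P.leadingCoeff α Q =
            Polynomial.C c *
              EuclideanDomain.gcd (P.map (algebraMap K (AlgebraicClosure K)))
                (Q.map (algebraMap K (AlgebraicClosure K)))) := by
  set f := P.map (algebraMap K (AlgebraicClosure K)) with hf
  set g := Q.map (algebraMap K (AlgebraicClosure K)) with hg
  have hP0 : P ≠ 0 := by rintro rfl; simp at hdegP; omega
  have hlc : algebraMap K (AlgebraicClosure K) P.leadingCoeff ≠ 0 := by simpa using hP0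
  have hf0 : f ≠ 0 := (Polynomial.map_ne_zero_iff (algebraMap K _).injective).2 hP0
  have hfn : f.natDegree = n := by rw [hf, natDegree_map, hdegP]
  have hroot : ∀ j, f.eval (α j) = 0 := fun j => by
    rw [hfact, eval_mul, eval_prod, Finset.prod_eq_zero (Finset.mem_univ j) (by simp), mul_zero]
  have hdvd : ∀ R : Polynomial (AlgebraicClosure K), (∀ j, R.eval (α j) = 0) → f ∣ R := by
    intro R hR
    rw [hfact, (isUnit_C.2 hlc.isUnit).mul_left_dvd]
    exact dvd_of_forall_eval_eq_zero hdist hR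
  have hscal : ∀ k, (-1) ^ k * algebraMap K (AlgebraicClosure K) P.leadingCoeff ^ (m - k) /
      (vmat n α).det ≠ 0 := fun k =>
    div_ne_zero (mul_ne_zero (pow_ne_zero _ (by simp)) (pow_ne_zero _ hlc))
      (det_vmat_ne_zero hdist)
  have hcoeff : ∀ k ≤ n, (subresPoly n m k P.leadingCoeff α Q).coeff k = 0 ↔
      (subresMinor n k α g).det = 0 := by
    intro k hk
    rw [subresPoly, coeff_C_mul, coeff_det_subresNum hk, mul_eq_zero_iff_left (hscal k),
      mul_eq_zero_iff_left (pow_ne_zero _ (by simp))]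
  set d := EuclideanDomain.gcd f g with hd
  have hdf : d ∣ f := EuclideanDomain.gcd_dvd_left f g
  have hdg : d ∣ g := EuclideanDomain.gcd_dvd_right f g
  have hlow : ∀ k < d.natDegree, (subresMinor n k α g).det = 0 := fun k hk =>
    det_subresMinor_eq_zero_of_lt α hroot hf0 hfn hdf hdg hk
  have htop : (subresMinor n d.natDegree α g).det ≠ 0 :=
    det_subresMinor_natDegree_gcd_ne_zero α hdvd hf0 hfn
  intro k hk
  refine ⟨⟨?_, ?_⟩, ?_⟩
  · rintro rfl
    exact ⟨fun j hj => (hcoeff j (by omega)).2 (hlow j hj),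
      fun h => htop ((hcoeff _ (by omega)).1 h)⟩
  · rintro ⟨hzero, hne⟩
    rcases lt_trichotomy d.natDegree k with h | h | h
    · exact absurd ((hcoeff _ (by omega)).1 (hzero _ h)) htop
    · exact h
    · exact absurd ((hcoeff k (by omega)).2 (hlow k h)) hne
  · intro hdk
    have hSk : (subresPoly n m k P.leadingCoeff α Q).coeff k ≠ 0 := fun h =>
      htop (hdk ▸ (hcoeff k (by omega)).1 h)
    have hdS : d ∣ subresPoly n m k P.leadingCoeff α Q := by
      obtain ⟨f', hf'⟩ := hdf
      have hf'0 : f' ≠ 0 := by rintro rfl; exact hf0 (by rw [hf', mul_zero])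
      refine (mul_dvd_mul_iff_right hf'0).1 (hf' ▸ hdvd _ fun j => ?_)
      have hj := hroot j
      rw [hf', eval_mul, mul_eq_zero] at hj
      rw [eval_mul, mul_eq_zero]
      refine hj.imp_left fun hdj => ?_
      have hgj : aeval (α j) Q = 0 := by
        rw [← eval_map_algebraMap]
        exact eval_eq_zero_of_dvd_of_eval_eq_zero hdg hdj
      rw [subresPoly, eval_mul, eval_det_subresNum α Q j hgj, mul_zero]
    obtain ⟨q, hq⟩ := hdS
    have hS0 : subresPoly n m k P.leadingCoeff α Q ≠ 0 := fun h => hSk (by rw [h, coeff_zero])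
    have hSdeg : (subresPoly n m k P.leadingCoeff α Q).natDegree ≤ k :=
      (natDegree_C_mul_le _ _).trans (natDegree_det_subresNum_le (by omega) α Q)
    rw [hq] at hS0
    rw [hq, natDegree_mul (left_ne_zero_of_mul hS0) (right_ne_zero_of_mul hS0)] at hSdeg
    have hqC := eq_C_of_natDegree_eq_zero (show q.natDegree = 0 by omega)
    refine ⟨q.coeff 0, fun h => right_ne_zero_of_mul hS0 (by rw [hqC, h, C_0]), ?_⟩
    rw [← hqC, hq, mul_comm]
end
end

section
/- Let ω = (ω_n, …, ω_1, ω_0) be a general basis of the polynomials of degree ≤ n over a field F, let F(x) = a_n ∏_{j=1}^n (x − α_j) with a_n ≠ 0 and α_1, …, α_n ∈ F̄ arbitrary (not necessarily distinct), let G ∈ F[x] with deg G = m < n, and let 0 ≤ k ≤ m. Then the following denominator-free identity holds in F̄[x]: (−1)^{(n−k)(n−k−1)/2} · a_n^{n−k} · D_ω = (−1)^k · det([B_{ω,k}; X_{ω,k}]) · det W(α), where D_ω is the determinant of the (n+1)×(n+1) matrix over F̄[x] whose entry in row i (1 ≤ i ≤ n−k) and column j (1 ≤ j ≤ n) is ω_{n−k−i}(α_j)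 G(α_j) with last-column entry 0, and whose entry in row n−k+i (1 ≤ i ≤ k+1) and column j is ω_{k+1−i}(α_j), with last-column entry ω_{k+1−i}(x); B_{ω,k} is the (n−k)×n submatrix of the Bézout matrix B_ω of F and G in ω obtained by deleting its last k rows; and W(α) is the n×n matrix with (i,j) entry ω_{n−i}(α_j). -/
open Polynomial Matrix BigOperators

noncomputable section

/-- The `k × n` matrix `X_{ω,k}`: rows `1,…,k` carry `−I_k` in (1-based) columns
`n−k, …, n−1`, and the last column of row `i` is `ω_{k+1−i}`. -/
def Xmat {K : Type*} [Field K] (n k : ℕ) (ω : ℕ → Polynomial K) :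
    Matrix (Fin k) (Fin n) (Polynomial K) :=
  Matrix.of fun i j =>
    if (j : ℕ) = n - k - 1 + (i : ℕ) then -1
    else if (j : ℕ) = n - 1 then ω (k - (i : ℕ))
    else 0

/-- Stacking an `(n−k) × n` scalar matrix on top of a `k × n` polynomial matrix. -/
def stackMat {K : Type*} [Field K] {n k : ℕ}
    (M : Matrix (Fin (n - k)) (Fin n) K) (Y : Matrix (Fin k) (Fin n) (Polynomial K)) :
    Matrix (Fin n) (Fin n) (Polynomial K) :=
  Matrix.of fun i j =>
    if h : (i : ℕ) < n - k then Polynomial.C (M ⟨(i : ℕ), h⟩ j)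
    else Y ⟨(i : ℕ) - (n - k), by have := i.isLt; omega⟩ j

/-- The matrix `W(β)` with `(i,j)` entry `ω_{n−i}(β_j)` (1-based `i`). -/
def Wmat {K L : Type*} [Field K] [Field L] [Algebra K L] (n : ℕ)
    (ω : ℕ → Polynomial K) (α : Fin n → L) : Matrix (Fin n) (Fin n) L :=
  Matrix.of fun i j => Polynomial.aeval (α j) (ω (n - 1 - (i : ℕ)))

/-- The analogue `D_ω` of the subresultant numerator matrix expressed in the general
basis `ω`: rows `1,…,n−k` have entries `ω_{n−k−i}(α_j) G(α_j)` (last column `0`),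
rows `n−k+1,…,n+1` have entries `ω_{k+1−i}(α_j)` (last column `ω_{k+1−i}(x)`). -/
def subresNumW {K L : Type*} [Field K] [Field L] [Algebra K L] (n k : ℕ)
    (ω : ℕ → Polynomial K) (α : Fin n → L) (G : Polynomial K) :
    Matrix (Fin (n + 1)) (Fin (n + 1)) (Polynomial L) :=
  Matrix.of fun i j =>
    if hj : (j : ℕ) < n then
      if (i : ℕ) < n - k then
        Polynomial.C (Polynomial.aeval (α ⟨(j : ℕ), hj⟩) (ω (n - k - 1 - (i : ℕ))) *
          Polynomial.aeval (α ⟨(j : ℕ), hj⟩) G)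
      else Polynomial.C (Polynomial.aeval (α ⟨(j : ℕ), hj⟩) (ω (n - (i : ℕ))))
    else
      if (i : ℕ) < n - k then 0 else (ω (n - (i : ℕ))).map (algebraMap K L)

/-- Determinant of an anti-triangular matrix with constant antidiagonal. -/
theorem det_of_antitriangular {R : Type*} [CommRing R] (a : R) :
    ∀ (r : ℕ) (M : Matrix (Fin r) (Fin r) R),
      (∀ i j : Fin r, (i : ℕ) + j + 1 < r → M i j = 0) →
      (∀ i j : Fin r, (i : ℕ) + j + 1 = r → M i j = a) →
      M.det = (-1) ^ (r * (r - 1) / 2) * a ^ r := by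
  intro r
  induction r with
  | zero => intro M _ _; simp
  | succ r ih =>
    intro M hzero hanti
    rw [det_succ_row_zero, Finset.sum_eq_single (Fin.last r)]
    · rw [ih (M.submatrix Fin.succ (Fin.last r).succAbove) ?_ ?_, hanti 0 (Fin.last r) (by simp)]
      · have hexp : (r + 1) * (r + 1 - 1) / 2 = r + r * (r - 1) / 2 := by
          rw [← Nat.choose_two_right, ← Nat.choose_two_right, Nat.choose_succ_succ' r 1,
            Nat.choose_one_right]
        rw [hexp, Fin.val_last, pow_add]
        ring
      · intro i j hij
        rw [submatrix_apply, Fin.succAbove_last]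
        apply hzero
        simp only [Fin.val_succ, Fin.val_castSucc]
        omega
      · intro i j hij
        rw [submatrix_apply, Fin.succAbove_last]
        apply hanti
        simp only [Fin.val_succ, Fin.val_castSucc]
        omega
    · intro j _ hj
      have hlt : (j : ℕ) ≠ r := fun h => hj (Fin.ext h)
      rw [hzero 0 j (by have := j.isLt; simp only [Fin.val_zero]; omega)]
      simp
    · simp

namespace IsGeneralBasis

variable {K : Type*} [Field K] {n : ℕ} {ω : ℕ → Polynomial K}

/-- Expansion of a polynomial of degree at most `d` in a general basis. -/
theorem exists_expansion (hω : IsGeneralBasis n ω) :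
    ∀ d ≤ n, ∀ p : Polynomial K, p.natDegree ≤ d →
      ∃ c : ℕ → K, p = ∑ l ∈ Finset.range (d + 1), C (c l) * ω l ∧ c d = p.coeff d := by
  intro d
  induction d with
  | zero =>
    intro _ p hp
    have h0 : ω 0 = 1 := by
      obtain ⟨hm, hd⟩ := hω 0 (Nat.zero_le n)
      exact hm.natDegree_eq_zero.mp hd
    refine ⟨fun _ => p.coeff 0, ?_, rfl⟩
    simpa [h0] using eq_C_of_natDegree_le_zero hp
  | succ d ih =>
    intro hd p hp
    obtain ⟨hm, hdeg⟩ := hω (d + 1) hd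
    have hcoeff : (ω (d + 1)).coeff (d + 1) = 1 := by
      rw [← hm.coeff_natDegree, hdeg]
    have hq : (p - C (p.coeff (d + 1)) * ω (d + 1)).natDegree ≤ d := by
      rw [natDegree_le_iff_coeff_eq_zero]
      intro N hN
      rcases (Nat.succ_le_of_lt hN).eq_or_lt with h | h
      · rw [← h]
        simp [hcoeff]
      · rw [coeff_sub, coeff_C_mul, coeff_eq_zero_of_natDegree_lt (lt_of_le_of_lt hp h),
          coeff_eq_zero_of_natDegree_lt (hdeg.trans_lt h)]
        simp
    obtain ⟨c, hc, -⟩ := ih (by omega) _ hq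
    refine ⟨Function.update c (d + 1) (p.coeff (d + 1)), ?_, by simp⟩
    rw [Finset.sum_range_succ, Function.update_self, ← sub_eq_iff_eq_add, hc]
    refine Finset.sum_congr rfl fun l hl => ?_
    rw [Function.update_of_ne (by have := Finset.mem_range.mp hl; omega)]

/-- A general basis stays linearly independent after extending scalars. -/
theorem eq_zero_of_sum_map_eq_zero {L : Type*} [Field L] [Algebra K L]
    (hω : IsGeneralBasis n ω) :
    ∀ N ≤ n + 1, ∀ c : ℕ → L,
      ∑ l ∈ Finset.range N, C (c l) * (ω l).map (algebraMap K L) = 0 → ∀ l < N, c l = 0 := by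
  intro N
  induction N with
  | zero => intro _ c _ l hl; omega
  | succ N ih =>
    intro hN c hc
    have hcoeff := congrArg (fun p => coeff p N) hc
    simp only [finsetSum_coeff, coeff_C_mul, coeff_map, coeff_zero] at hcoeff
    obtain ⟨hm, hdeg⟩ := hω N (by omega)
    have hone : (ω N).coeff N = 1 := by rw [← hm.coeff_natDegree, hdeg]
    rw [Finset.sum_range_succ, Finset.sum_eq_zero, hone, map_one, mul_one, zero_add] at hcoeff
    · rw [Finset.sum_range_succ, hcoeff, map_zero, zero_mul, add_zero] at hc
      intro l hl
      rcases (Nat.lt_succ_iff.mp hl).eq_or_lt with rfl | h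
      · exact hcoeff
      · exact ih (by omega) c hc l h
    · intro l hl
      have hl' := Finset.mem_range.mp hl
      rw [coeff_eq_zero_of_natDegree_lt ((hω l (by omega)).2.trans_lt hl')]
      simp

/-- The divided difference of `P`, with its first variable expanded in a general basis. -/
theorem exists_dividedDifference_expansion {L : Type*} [Field L] [Algebra K L]
    (hω : IsGeneralBasis n ω) (P : Polynomial K) (hP : P.natDegree ≤ n) :
    ∃ p : ℕ → Polynomial K,
      (∀ l < n, (p l).natDegree ≤ n - 1 - l ∧ (p l).coeff (n - 1 - l) = P.coeff n) ∧
      ∀ β : L, P.map (algebraMap K L) - C (aeval β P) =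
        (X - C β) * ∑ l ∈ Finset.range n, C (aeval β (p l)) * (ω l).map (algebraMap K L) := by
  have hX : ∀ t : ℕ, ∃ u : ℕ → K, t < n →
      (X ^ t : Polynomial K) = ∑ l ∈ Finset.range (t + 1), C (u l) * ω l ∧ u t = 1 := by
    intro t
    by_cases ht : t < n
    · obtain ⟨u, hu, hut⟩ := hω.exists_expansion t ht.le (X ^ t) (natDegree_X_pow_le t)
      exact ⟨u, fun _ => ⟨hu, by simpa using hut⟩⟩
    · exact ⟨0, fun h => absurd h ht⟩
  choose u hu using hX
  let h : ℕ → Polynomial K := fun t =>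
    ∑ s ∈ Finset.Ico (t + 1) (n + 1), C (P.coeff s) * X ^ (s - 1 - t)
  have hdeg : ∀ t, (h t).natDegree ≤ n - 1 - t := fun t =>
    natDegree_sum_le_of_forall_le _ _ fun s hs =>
      (natDegree_C_mul_X_pow_le _ _).trans (by have := Finset.mem_Ico.mp hs; omega)
  have hlead : ∀ t < n, (h t).coeff (n - 1 - t) = P.coeff n := by
    intro t ht
    simp only [h, finsetSum_coeff, coeff_C_mul, coeff_X_pow]
    rw [Finset.sum_eq_single n]
    · simp
    · intro s hs hsn
      have := Finset.mem_Ico.mp hs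
      rw [if_neg (by omega), mul_zero]
    · intro hn
      exact absurd (Finset.mem_Ico.mpr ⟨by omega, by omega⟩) hn
  refine ⟨fun l => ∑ t ∈ Finset.Ico l n, C (u t l) * h t, fun l hl => ⟨?_, ?_⟩, fun β => ?_⟩
  · exact natDegree_sum_le_of_forall_le _ _ fun t ht =>
      (natDegree_C_mul_le _ _).trans ((hdeg t).trans (by have := Finset.mem_Ico.mp ht; omega))
  · simp only [finsetSum_coeff, coeff_C_mul]
    rw [Finset.sum_eq_single l]
    · rw [(hu l hl).2, one_mul, hlead l hl]
    · intro t ht htl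
      have := Finset.mem_Ico.mp ht
      rw [coeff_eq_zero_of_natDegree_lt ((hdeg t).trans_lt (by omega)), mul_zero]
    · intro hn
      exact absurd (Finset.mem_Ico.mpr ⟨le_rfl, hl⟩) hn
  · have hswap : ∑ l ∈ Finset.range n,
          C (aeval β (∑ t ∈ Finset.Ico l n, C (u t l) * h t)) * (ω l).map (algebraMap K L) =
        ∑ t ∈ Finset.range n, C (aeval β (h t)) * X ^ t := by
      have hXt : ∀ t < n, (X ^ t : Polynomial L) =
          ∑ l ∈ Finset.range (t + 1),
            C (algebraMap K L (u t l)) * (ω l).map (algebraMap K L) := by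
        intro t ht
        have := congrArg (Polynomial.map (algebraMap K L)) (hu t ht).1
        simpa [Polynomial.map_sum] using this
      have hrhs : ∑ t ∈ Finset.range n, C (aeval β (h t)) * X ^ t =
          ∑ t ∈ Finset.range n, C (aeval β (h t)) * ∑ l ∈ Finset.range (t + 1),
            C (algebraMap K L (u t l)) * (ω l).map (algebraMap K L) :=
        Finset.sum_congr rfl fun t ht => by rw [← hXt t (Finset.mem_range.mp ht)]
      rw [hrhs]
      simp only [map_sum, map_mul, aeval_C, Finset.sum_mul, Finset.mul_sum]
      rw [Finset.sum_comm' (t' := Finset.range n) (s' := fun t => Finset.range (t + 1))]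
      · refine Finset.sum_congr rfl fun t _ => Finset.sum_congr rfl fun l _ => ?_
        ring
      · intro l t
        simp only [Finset.mem_range, Finset.mem_Ico]
        omega
    have hswap' : ∑ t ∈ Finset.range n, C (aeval β (h t)) * X ^ t =
        ∑ s ∈ Finset.range (n + 1), C (algebraMap K L (P.coeff s)) *
          ∑ t ∈ Finset.range s, X ^ t * (C β) ^ (s - 1 - t) := by
      simp only [h, map_sum, map_mul, aeval_C, aeval_X, map_pow, Finset.sum_mul, Finset.mul_sum]
      rw [Finset.sum_comm' (t' := Finset.range (n + 1)) (s' := fun s => Finset.range s)]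
      · refine Finset.sum_congr rfl fun s _ => Finset.sum_congr rfl fun t _ => ?_
        ring
      · intro t s
        simp only [Finset.mem_range, Finset.mem_Ico]
        omega
    rw [hswap, hswap', Finset.mul_sum]
    have hterm : ∀ s, (X - C β) * (C (algebraMap K L (P.coeff s)) *
        ∑ t ∈ Finset.range s, X ^ t * (C β) ^ (s - 1 - t)) =
        C (algebraMap K L (P.coeff s)) * X ^ s - C (algebraMap K L (P.coeff s) * β ^ s) := by
      intro s
      rw [mul_left_comm, (Commute.all X (C β)).mul_geom_sum₂, mul_sub, C_mul, C_pow]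
    rw [Finset.sum_congr rfl fun s _ => hterm s, Finset.sum_sub_distrib]
    congr 1
    · conv_lhs => rw [P.as_sum_range' (n + 1) (by omega)]
      simp [Polynomial.map_sum, ← C_mul_X_pow_eq_monomial]
    · conv_lhs => rw [P.as_sum_range' (n + 1) (by omega)]
      simp [← C_mul_X_pow_eq_monomial]

/-- At a root `β` of `P`, the `i`-th row of the Bézout matrix applied to `ω̄(β)` is `Q(β)` times a
combination of `ω_0(β), …, ω_i(β)`, in which `ω_i(β)` has coefficient `P.coeff n`. -/
theorem exists_bezout_mulVec_expansion {L : Type*} [Field L] [Algebra K L]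
    (hω : IsGeneralBasis n ω) {P Q : Polynomial K} (hP : P.natDegree ≤ n)
    {B : Matrix (Fin n) (Fin n) K} (hB : BezoutRelation n ω P Q B) :
    ∃ c : ℕ → ℕ → K, (∀ i < n, c i i = P.coeff n) ∧
      ∀ β : L, aeval β P = 0 → ∀ i : Fin n,
        ∑ j : Fin n, algebraMap K L (B i j) * aeval β (ω (n - 1 - (j : ℕ))) =
          ∑ l ∈ Finset.range ((i : ℕ) + 1),
            algebraMap K L (c i l) * (aeval β (ω l) * aeval β Q) := by
  obtain ⟨p, hp, hdiff⟩ := hω.exists_dividedDifference_expansion (L := L) P hP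
  have hexp : ∀ i : ℕ, ∃ c : ℕ → K, i < n →
      p (n - 1 - i) = ∑ l ∈ Finset.range (i + 1), C (c l) * ω l ∧ c i = P.coeff n := by
    intro i
    by_cases hi : i < n
    · obtain ⟨hd, hc⟩ := hp (n - 1 - i) (by omega)
      have hii : n - 1 - (n - 1 - i) = i := by omega
      rw [hii] at hd hc
      obtain ⟨c, hce, hci⟩ := hω.exists_expansion i hi.le _ hd
      exact ⟨c, fun _ => ⟨hce, hci.trans hc⟩⟩
    · exact ⟨0, fun h => absurd h hi⟩
  choose c hc using hexp
  refine ⟨c, fun i hi => (hc i hi).2, fun β hβ i => ?_⟩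
  let b : ℕ → L := fun l => if h : n - 1 - l < n then
    ∑ j : Fin n, algebraMap K L (B ⟨n - 1 - l, h⟩ j) * aeval β (ω (n - 1 - (j : ℕ))) else 0
  have hbez := congrArg (Polynomial.map (aeval β : Polynomial K →ₐ[K] L).toRingHom) hB
  have hcomp : (aeval β : Polynomial K →ₐ[K] L).toRingHom.comp C = algebraMap K L := by
    ext x
    simp
  have hβ' : (aeval β : Polynomial K →ₐ[K] L).toRingHom P = 0 := hβ
  simp only [Polynomial.map_sub, Polynomial.map_mul, Polynomial.map_map, hcomp, map_C, hβ',
    Polynomial.map_sum, map_X] at hbez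
  have hdiffβ := hdiff β
  rw [hβ, map_zero, sub_zero] at hdiffβ
  rw [hdiffβ, map_zero, zero_mul, sub_zero, mul_assoc] at hbez
  have hXne : (X - C β : Polynomial L) ≠ 0 := X_sub_C_ne_zero β
  have hsum : ∑ l ∈ Finset.range n, C (b l) * (ω l).map (algebraMap K L) =
      ∑ i : Fin n, ∑ j : Fin n, (ω (n - 1 - (i : ℕ))).map (algebraMap K L) *
        C (aeval β (ω (n - 1 - (j : ℕ)))) * C (algebraMap K L (B i j)) := by
    rw [← Finset.sum_range_reflect, ← Fin.sum_univ_eq_sum_range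
      (fun l => C (b (n - 1 - l)) * (ω (n - 1 - l)).map (algebraMap K L))]
    refine Finset.sum_congr rfl fun i _ => ?_
    have hi : n - 1 - (n - 1 - (i : ℕ)) = i := by have := i.isLt; omega
    simp only [b, hi, i.isLt, dite_true, Fin.eta, map_sum, map_mul, Finset.sum_mul]
    refine Finset.sum_congr rfl fun j _ => ?_
    ring
  have heq : ∑ l ∈ Finset.range n,
      C (b l - aeval β (p l) * aeval β Q) * (ω l).map (algebraMap K L) = 0 := by
    have hcancel : (∑ l ∈ Finset.range n, C (aeval β (p l)) * (ω l).map (algebraMap K L)) *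
        C (aeval β Q) = ∑ l ∈ Finset.range n, C (b l) * (ω l).map (algebraMap K L) := by
      apply mul_left_cancel₀ hXne
      rw [hsum]
      simpa using hbez
    simp only [C_sub, sub_mul, Finset.sum_sub_distrib]
    rw [← hcancel, Finset.sum_mul, sub_eq_zero]
    refine Finset.sum_congr rfl fun l _ => ?_
    rw [C_mul]
    ring
  have hi : n - 1 - (n - 1 - (i : ℕ)) = i := by have := i.isLt; omega
  have hrow := hω.eq_zero_of_sum_map_eq_zero n (by omega) _ heq (n - 1 - i)
    (by have := i.isLt; omega)
  simp only [b, hi, i.isLt, dite_true, Fin.eta, sub_eq_zero] at hrow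
  rw [hrow, (hc i i.isLt).1, map_sum, Finset.sum_mul]
  refine Finset.sum_congr rfl fun l _ => ?_
  rw [map_mul, aeval_C, mul_assoc]

end IsGeneralBasis

/-- The matrix `D_ω` with its first `n − k` rows replaced by the first `n − k` rows of
`B W(α)`. -/
def bezoutNum {K L : Type*} [Field K] [Field L] [Algebra K L] (n k : ℕ)
    (ω : ℕ → Polynomial K) (α : Fin n → L) (B : Matrix (Fin n) (Fin n) K) :
    Matrix (Fin (n + 1)) (Fin (n + 1)) (Polynomial L) :=
  Matrix.of fun i j =>
    if hj : (j : ℕ) < n then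
      if hi : (i : ℕ) < n - k then
        C (∑ l : Fin n, algebraMap K L (B ⟨i, by omega⟩ l) *
          aeval (α ⟨j, hj⟩) (ω (n - 1 - (l : ℕ))))
      else C (aeval (α ⟨j, hj⟩) (ω (n - (i : ℕ))))
    else
      if (i : ℕ) < n - k then 0 else (ω (n - (i : ℕ))).map (algebraMap K L)

theorem det_bezoutNum {K L : Type*} [Field K] [Field L] [Algebra K L] {n k : ℕ}
    {ω : ℕ → Polynomial K} (hω : IsGeneralBasis n ω) (hk : k < n) (α : Fin n → L)
    (B : Matrix (Fin n) (Fin n) K) :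
    (bezoutNum n k ω α B).det =
      (-1) ^ k * ((stackMat (topRows n k B) (Xmat n k ω)).det).map (algebraMap K L) *
        C (Wmat n ω α).det := by
  have hω0 : ω 0 = 1 := by
    obtain ⟨hm, hd⟩ := hω 0 (Nat.zero_le n)
    exact hm.natDegree_eq_zero.mp hd
  let S : Matrix (Fin n) (Fin n) (Polynomial L) :=
    (mapRingHom (algebraMap K L)).mapMatrix (stackMat (topRows n k B) (Xmat n k ω))
  let σ : Fin n → Polynomial L := fun i => if (i : ℕ) < n - k then 1 else -1
  let v : Matrix (Fin n) (Fin 1) (Polynomial L) := Matrix.of fun i _ =>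
    if (i : ℕ) < n - k then 0 else (ω (n - (i : ℕ))).map (algebraMap K L)
  let e : Matrix (Fin 1) (Fin n) (Polynomial L) := Matrix.of fun _ j =>
    if (j : ℕ) = n - 1 then 1 else 0
  have hσ : ∏ i, σ i = (-1) ^ k := by
    rw [Fin.prod_univ_eq_prod_range (fun i => if i < n - k then (1 : Polynomial L) else -1) n]
    obtain ⟨r, rfl⟩ := Nat.exists_eq_add_of_le' hk.le
    rw [Finset.prod_range_add, Finset.prod_eq_one fun i hi => by
      rw [if_pos (by have := Finset.mem_range.mp hi; omega)]]
    rw [Finset.prod_congr rfl fun i _ => if_neg (by omega)]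
    simp
  have hN : ∀ i l : Fin n, (diagonal σ * S + v * e) i l =
      if (i : ℕ) < n - k then C (algebraMap K L (B i l))
      else if (l : ℕ) = i - 1 then 1 else 0 := by
    intro i l
    have hi := i.isLt
    have hl := l.isLt
    rw [Matrix.add_apply, diagonal_mul, Matrix.mul_apply, Fin.sum_univ_one]
    simp only [σ, S, v, e, Matrix.of_apply, RingHom.mapMatrix_apply, Matrix.map_apply, stackMat,
      topRows, Xmat, coe_mapRingHom]
    by_cases h : (i : ℕ) < n - k
    · simp [h]
    · have h1 : n - k - 1 + ((i : ℕ) - (n - k)) = i - 1 := by omega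
      have h2 : k - ((i : ℕ) - (n - k)) = n - i := by omega
      simp only [h, dite_false, if_false, h1, h2]
      by_cases h3 : (l : ℕ) = i - 1
      · have h4 : ¬ (i : ℕ) - 1 = n - 1 := by omega
        simp [h3, h4]
      · by_cases h5 : (l : ℕ) = n - 1 <;> simp [h3, h5]
        have h6 : ¬ n - 1 = (i : ℕ) - 1 := by omega
        simp [h6]
  have hfactor : (bezoutNum n k ω α B).submatrix finSumFinEquiv finSumFinEquiv =
      fromBlocks (diagonal σ) v 0 1 * fromBlocks S 0 e 1 *
        fromBlocks (C.mapMatrix (Wmat n ω α)) 0 0 1 := by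
    rw [fromBlocks_multiply, fromBlocks_multiply]
    simp only [Matrix.mul_zero, Matrix.zero_mul, add_zero, zero_add, Matrix.one_mul,
      Matrix.mul_one]
    ext1 i j
    rcases i with i | i <;> rcases j with j | j
    · have hi := i.isLt
      rw [submatrix_apply, fromBlocks_apply₁₁, Matrix.mul_apply]
      simp only [hN, bezoutNum, Matrix.of_apply, finSumFinEquiv_apply_left, Fin.val_castAdd,
        j.isLt, dite_true, RingHom.mapMatrix_apply, Matrix.map_apply, Wmat, Fin.eta]
      by_cases h : (i : ℕ) < n - k
      · simp [h]
      · simp only [h, dite_false, if_false]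
        rw [Finset.sum_eq_single (⟨i - 1, by omega⟩ : Fin n)]
        · have h1 : n - 1 - ((i : ℕ) - 1) = n - i := by omega
          simp [h1]
        · intro l _ hl
          rw [if_neg fun h => hl (Fin.ext h), zero_mul]
        · simp
    · simp [bezoutNum, v]
    · rw [submatrix_apply, fromBlocks_apply₂₁, Matrix.mul_apply,
        Finset.sum_eq_single (⟨n - 1, by omega⟩ : Fin n)]
      · have h : ¬ n < n - k := by omega
        simp [bezoutNum, e, Wmat, h, hω0]
      · intro l _ hl
        simp only [e, Matrix.of_apply]
        rw [if_neg fun h => hl (Fin.ext h), zero_mul]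
      · simp
    · have h : ¬ n < n - k := by omega
      have hij : i = j := Subsingleton.elim i j
      simp [bezoutNum, h, hω0, hij]
  rw [← det_submatrix_equiv_self finSumFinEquiv, hfactor, det_mul, det_mul,
    det_fromBlocks_zero₂₁, det_fromBlocks_zero₁₂, det_fromBlocks_zero₂₁, det_diagonal, hσ,
    ← RingHom.map_det, ← RingHom.map_det, coe_mapRingHom]
  simp

theorem det_bezoutNum_eq_det_subresNumW {K L : Type*} [Field K] [Field L] [Algebra K L]
    {n k : ℕ} {ω : ℕ → Polynomial K} {Q : Polynomial K} (hk : k < n) {α : Fin n → L}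
    {B : Matrix (Fin n) (Fin n) K} {a : K} {c : ℕ → ℕ → K} (hc : ∀ i < n, c i i = a)
    (hrow : ∀ i j : Fin n,
      ∑ l : Fin n, algebraMap K L (B i l) * aeval (α j) (ω (n - 1 - (l : ℕ))) =
        ∑ l ∈ Finset.range ((i : ℕ) + 1),
          algebraMap K L (c i l) * (aeval (α j) (ω l) * aeval (α j) Q)) :
    (bezoutNum n k ω α B).det =
      (-1) ^ ((n - k) * (n - k - 1) / 2) * C (algebraMap K L a ^ (n - k)) *
        (subresNumW n k ω α Q).det := by
  let T : Matrix (Fin (n - k)) (Fin (n - k)) (Polynomial L) := Matrix.of fun i j =>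
    if n - k - 1 - (j : ℕ) < i + 1 then C (algebraMap K L (c i (n - k - 1 - j))) else 0
  have hT : T.det = (-1) ^ ((n - k) * (n - k - 1) / 2) * C (algebraMap K L a ^ (n - k)) := by
    rw [C_pow]
    refine det_of_antitriangular _ _ T (fun i j hij => ?_) fun i j hij => ?_
    · exact if_neg (by omega)
    · have h : n - k - 1 - (j : ℕ) = i := by omega
      simp only [T, Matrix.of_apply, h, Nat.lt_succ_self, if_true, hc i (by omega)]
  let ε : Fin (n - k) ⊕ Fin (k + 1) ≃ Fin (n + 1) :=
    finSumFinEquiv.trans (finCongr (by omega))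
  have hεl : ∀ i, (ε (Sum.inl i) : ℕ) = i := fun i => by simp [ε]
  have hεr : ∀ i, (ε (Sum.inr i) : ℕ) = n - k + i := fun i => by simp [ε]
  have hfactor : (bezoutNum n k ω α B).submatrix ε ε =
      fromBlocks T 0 0 1 * (subresNumW n k ω α Q).submatrix ε ε := by
    ext1 i j
    rw [Matrix.mul_apply, Fintype.sum_sum_type]
    simp only [submatrix_apply]
    generalize ε j = j'
    rcases i with i | i
    · have hi := i.isLt
      simp only [fromBlocks_apply₁₁, fromBlocks_apply₁₂, Matrix.zero_apply, zero_mul,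
        Finset.sum_const_zero, add_zero]
      by_cases hj : (j' : ℕ) < n
      · simp only [bezoutNum, subresNumW, Matrix.of_apply, hεl, hj, dite_true, hi, T,
          Fin.is_lt, if_true]
        rw [hrow ⟨i, by omega⟩ ⟨j', hj⟩]
        rw [Fin.sum_univ_eq_sum_range (fun l =>
          (if n - k - 1 - l < (i : ℕ) + 1 then C (algebraMap K L (c i (n - k - 1 - l))) else 0) *
            C (aeval (α ⟨j', hj⟩) (ω (n - k - 1 - l)) * aeval (α ⟨j', hj⟩) Q)) (n - k),
          Finset.sum_range_reflect (fun l =>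
          (if l < (i : ℕ) + 1 then C (algebraMap K L (c i l)) else 0) *
            C (aeval (α ⟨j', hj⟩) (ω l) * aeval (α ⟨j', hj⟩) Q)) (n - k), map_sum]
        refine Finset.sum_subset_zero_on_sdiff (Finset.range_mono (Nat.succ_le_of_lt hi))
          (fun l hl => ?_) fun l hl => ?_
        · simp only [Finset.mem_sdiff, Finset.mem_range] at hl
          rw [if_neg hl.2, zero_mul]
        · rw [if_pos (Finset.mem_range.mp hl), C_mul]
      · simp [bezoutNum, subresNumW, hεl, hj]
    · simp only [fromBlocks_apply₂₁, fromBlocks_apply₂₂, Matrix.zero_apply, zero_mul,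
        Finset.sum_const_zero, zero_add, Matrix.one_apply, ite_mul, one_mul,
        Finset.sum_ite_eq, Finset.mem_univ, if_true]
      simp [bezoutNum, subresNumW, hεr]
  rw [← det_submatrix_equiv_self ε, hfactor, det_mul, det_fromBlocks_zero₂₁, det_one, mul_one,
    hT, det_submatrix_equiv_self]

/-- denominator-free identity
`(−1)^{(n−k)(n−k−1)/2} aₙ^{n−k} D_ω = (−1)^k det [B_{ω,k}; X_{ω,k}] · det W(α)`
in `F̄[x]`, for arbitrary (not necessarily distinct) roots `α` of `F`. -/
theorem denominator_free_subresultant_identity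
    {K : Type*} [Field K] (n m k : ℕ) (hmn : m < n) (hkm : k ≤ m)
    (ω : ℕ → Polynomial K) (hω : IsGeneralBasis n ω)
    (P Q : Polynomial K) (a : K) (ha : a ≠ 0)
    (hdegQ : Q.natDegree = m)
    (α : Fin n → AlgebraicClosure K)
    (hfact : P.map (algebraMap K (AlgebraicClosure K)) =
      Polynomial.C (algebraMap K (AlgebraicClosure K) a) *
        ∏ j : Fin n, (Polynomial.X - Polynomial.C (α j)))
    (B : Matrix (Fin n) (Fin n) K) (hB : BezoutRelation n ω P Q B) :
    (-1 : Polynomial (AlgebraicClosure K)) ^ ((n - k) * (n - k - 1) / 2) *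
        Polynomial.C (algebraMap K (AlgebraicClosure K) a ^ (n - k)) *
        (subresNumW n k ω α Q).det =
      (-1 : Polynomial (AlgebraicClosure K)) ^ k *
        ((stackMat (topRows n k B) (Xmat n k ω)).det).map
          (algebraMap K (AlgebraicClosure K)) *
        Polynomial.C (Wmat n ω α).det := by
  have hP : P.natDegree = n := by
    rw [← natDegree_map (algebraMap K (AlgebraicClosure K)), hfact, natDegree_C_mul (by simpa),
      natDegree_finsetProd_X_sub_C_eq_card]
    simp
  have hcoeff : P.coeff n = a := by
    apply (algebraMap K (AlgebraicClosure K)).injective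
    rw [← coeff_map, hfact, coeff_C_mul]
    have hmonic : (∏ j : Fin n, (X - C (α j))).Monic := monic_prod_X_sub_C α Finset.univ
    have hone := hmonic.coeff_natDegree
    rw [natDegree_finsetProd_X_sub_C_eq_card, Finset.card_univ, Fintype.card_fin] at hone
    rw [hone, mul_one]
  have hroot : ∀ j, aeval (α j) P = 0 := by
    intro j
    rw [aeval_def, ← eval_map, hfact, eval_mul, eval_prod,
      Finset.prod_eq_zero (Finset.mem_univ j) (by simp), mul_zero]
  obtain ⟨c, hc, hrow⟩ :=
    hω.exists_bezout_mulVec_expansion (L := AlgebraicClosure K) hP.le hB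
  rw [← det_bezoutNum hω (hkm.trans_lt hmn) α B,
    det_bezoutNum_eq_det_subresNumW (Q := Q) (hkm.trans_lt hmn) (a := a) (c := c)
      (fun i hi => (hc i hi).trans hcoeff) fun i j => hrow (α j) (hroot j) i]
end
end
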